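/- Typing preservation of the FG-to-CG translation: If Γ ⊢_pc e : τ is derivable in FG, then there is a unique CG expression e_c such that Γ ⊢_pc e : τ ⇝ e_c is derivable, and this e_c satisfies ⟦Γ⟧ ⊢ e_c : CG pc ⊥ ⟦τ⟧ in CG, where ⟦Γ⟧ is the pointwise type translation of Γ. -/

import Mathlib

/-!
The translated expression depends only on the source expression, not on the typing derivation:
subsumption leaves the translated expression unchanged, and every other rule is directed by the
head constructor of the expression. Hence there is a function `fgToCg` on raw expressions with
`FG2CG Γ pc e τ ec → ec = fgToCg e` (`FG2CG.eq_fgToCg`), which gives uniqueness, and every FG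
derivation yields a derivation of the translation judgment at `fgToCg e` (`FGTyped.fg2cg`), which
gives existence.

That the result has type `CG pc ⊥ ⟦τ⟧` is shown by induction on the translation judgment
(`FG2CG.cgTyped`). It needs weakening for CG (`CGTyped.weaken`), since subterms are shifted under
binders; monotonicity of the type translation under subtyping (`FGSub.toCG`), for the rules `sub`
and `deref`; and the typing of `coerceTaint` (`CGTyped.coerceTaint`), which trades the taint `ℓ` of
a computation of type `CG pc ℓ (Labeled ℓ' A)`, with `ℓ ⊑ ℓ'`, for the label `ℓ'` already present
on its result. The side conditions `τ ↘ ℓ` of the FG elimination rules are exactly `ℓ ⊑ ℓ'`.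
-/

/-! ## Shared expression syntax for the FG and CG calculi (de Bruijn indices) -/

inductive Exp : Type where
  | var (n : ℕ)
  | lam (e : Exp)
  | app (e1 e2 : Exp)
  | pair (e1 e2 : Exp)
  | fst (e : Exp)
  | snd (e : Exp)
  | inl (e : Exp)
  | inr (e : Exp)
  | case (e e1 e2 : Exp)      -- the two branches each bind one variable
  | tt
  | ff
  | unit
  | loc (n : ℕ)
  | new (e : Exp)
  | deref (e : Exp)
  | assign (e1 e2 : Exp)
  | label (e : Exp)
  | unlabel (e : Exp)
  | toLabeled (e : Exp)
  | ret (e : Exp)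
  | bind (e1 e2 : Exp)        -- e2 binds one variable
deriving DecidableEq

namespace Exp

/-- Shift free de Bruijn indices `≥ c` up by one. -/
def shift (c : ℕ) : Exp → Exp
  | var n => if n < c then var n else var (n + 1)
  | lam e => lam (e.shift (c + 1))
  | app e1 e2 => app (e1.shift c) (e2.shift c)
  | pair e1 e2 => pair (e1.shift c) (e2.shift c)
  | fst e => fst (e.shift c)
  | snd e => snd (e.shift c)
  | inl e => inl (e.shift c)
  | inr e => inr (e.shift c)
  | case e e1 e2 => case (e.shift c) (e1.shift (c + 1)) (e2.shift (c + 1))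
  | tt => tt
  | ff => ff
  | unit => unit
  | loc n => loc n
  | new e => new (e.shift c)
  | deref e => deref (e.shift c)
  | assign e1 e2 => assign (e1.shift c) (e2.shift c)
  | label e => label (e.shift c)
  | unlabel e => unlabel (e.shift c)
  | toLabeled e => toLabeled (e.shift c)
  | ret e => ret (e.shift c)
  | bind e1 e2 => bind (e1.shift c) (e2.shift (c + 1))

/-- Substitution `e[v/k]` of `v` for de Bruijn index `k` in `e`. -/
def subst : Exp → Exp → ℕ → Exp
  | var n, v, k => if n = k then v else if k < n then var (n - 1) else var n
  | lam e, v, k => lam (e.subst (v.shift 0) (k + 1))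
  | app e1 e2, v, k => app (e1.subst v k) (e2.subst v k)
  | pair e1 e2, v, k => pair (e1.subst v k) (e2.subst v k)
  | fst e, v, k => fst (e.subst v k)
  | snd e, v, k => snd (e.subst v k)
  | inl e, v, k => inl (e.subst v k)
  | inr e, v, k => inr (e.subst v k)
  | case e e1 e2, v, k =>
      case (e.subst v k) (e1.subst (v.shift 0) (k + 1)) (e2.subst (v.shift 0) (k + 1))
  | tt, _, _ => tt
  | ff, _, _ => ff
  | unit, _, _ => unit
  | loc n, _, _ => loc n
  | new e, v, k => new (e.subst v k)
  | deref e, v, k => deref (e.subst v k)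
  | assign e1 e2, v, k => assign (e1.subst v k) (e2.subst v k)
  | label e, v, k => label (e.subst v k)
  | unlabel e, v, k => unlabel (e.subst v k)
  | toLabeled e, v, k => toLabeled (e.subst v k)
  | ret e, v, k => ret (e.subst v k)
  | bind e1 e2, v, k => bind (e1.subst v k) (e2.subst (v.shift 0) (k + 1))

end Exp

/-- Heaps: locations are list indices; allocation appends. -/
abbrev Heap := List Exp

/-! ## Values -/

/-- Values of the FG language. -/
inductive FGVal : Exp → Prop where
  | lam : FGVal (.lam e)
  | pair : FGVal v1 → FGVal v2 → FGVal (.pair v1 v2)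
  | inl : FGVal v → FGVal (.inl v)
  | inr : FGVal v → FGVal (.inr v)
  | tt : FGVal .tt
  | ff : FGVal .ff
  | unit : FGVal .unit
  | loc : FGVal (.loc n)

/-- Values of the CG language (monadic expressions are suspended computations,
hence values; labeled values are values). -/
inductive CGVal : Exp → Prop where
  | lam : CGVal (.lam e)
  | pair : CGVal v1 → CGVal v2 → CGVal (.pair v1 v2)
  | inl : CGVal v → CGVal (.inl v)
  | inr : CGVal v → CGVal (.inr v)
  | tt : CGVal .tt
  | ff : CGVal .ff
  | unit : CGVal .unit
  | loc : CGVal (.loc n)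
  | label : CGVal v → CGVal (.label v)
  | ret : CGVal (.ret e)
  | bind : CGVal (.bind e1 e2)
  | unlabel : CGVal (.unlabel e)
  | toLabeled : CGVal (.toLabeled e)
  | new : CGVal (.new e)
  | deref : CGVal (.deref e)
  | assign : CGVal (.assign e1 e2)

/-! ## FG: deterministic big-step call-by-value evaluation over heaps -/

inductive FGEval : Heap → Exp → Heap → Exp → Prop where
  | lam : FGEval h (.lam e) h (.lam e)
  | tt : FGEval h .tt h .tt
  | ff : FGEval h .ff h .ff
  | unit : FGEval h .unit h .unit
  | loc : FGEval h (.loc n) h (.loc n)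
  | app : FGEval h e1 h1 (.lam e) → FGEval h1 e2 h2 v2 →
      FGEval h2 (e.subst v2 0) h3 v → FGEval h (.app e1 e2) h3 v
  | pair : FGEval h e1 h1 v1 → FGEval h1 e2 h2 v2 →
      FGEval h (.pair e1 e2) h2 (.pair v1 v2)
  | fst : FGEval h e h1 (.pair v1 v2) → FGEval h (.fst e) h1 v1
  | snd : FGEval h e h1 (.pair v1 v2) → FGEval h (.snd e) h1 v2
  | inl : FGEval h e h1 v → FGEval h (.inl e) h1 (.inl v)
  | inr : FGEval h e h1 v → FGEval h (.inr e) h1 (.inr v)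
  | caseL : FGEval h e h1 (.inl v) → FGEval h1 (e1.subst v 0) h2 w →
      FGEval h (.case e e1 e2) h2 w
  | caseR : FGEval h e h1 (.inr v) → FGEval h1 (e2.subst v 0) h2 w →
      FGEval h (.case e e1 e2) h2 w
  | new : FGEval h e h1 v → FGEval h (.new e) (h1 ++ [v]) (.loc h1.length)
  | deref : FGEval h e h1 (.loc n) → h1[n]? = some v → FGEval h (.deref e) h1 v
  | assign : FGEval h e1 h1 (.loc n) → FGEval h1 e2 h2 v →
      FGEval h (.assign e1 e2) (h2.set n v) .unit

/-! ## CG: pure big-step evaluation (no heap) and forcing semantics over heaps -/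

/-- Pure (heap-free) big-step evaluation for CG.  Monadic expressions are
suspended computations and evaluate to themselves. -/
inductive CGPure : Exp → Exp → Prop where
  | lam : CGPure (.lam e) (.lam e)
  | tt : CGPure .tt .tt
  | ff : CGPure .ff .ff
  | unit : CGPure .unit .unit
  | loc : CGPure (.loc n) (.loc n)
  | app : CGPure e1 (.lam e) → CGPure e2 v2 → CGPure (e.subst v2 0) v →
      CGPure (.app e1 e2) v
  | pair : CGPure e1 v1 → CGPure e2 v2 → CGPure (.pair e1 e2) (.pair v1 v2)
  | fst : CGPure e (.pair v1 v2) → CGPure (.fst e) v1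
  | snd : CGPure e (.pair v1 v2) → CGPure (.snd e) v2
  | inl : CGPure e v → CGPure (.inl e) (.inl v)
  | inr : CGPure e v → CGPure (.inr e) (.inr v)
  | caseL : CGPure e (.inl v) → CGPure (e1.subst v 0) w → CGPure (.case e e1 e2) w
  | caseR : CGPure e (.inr v) → CGPure (e2.subst v 0) w → CGPure (.case e e1 e2) w
  | label : CGPure e v → CGPure (.label e) (.label v)
  | ret : CGPure (.ret e) (.ret e)
  | bind : CGPure (.bind e1 e2) (.bind e1 e2)
  | unlabel : CGPure (.unlabel e) (.unlabel e)
  | toLabeled : CGPure (.toLabeled e) (.toLabeled e)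
  | new : CGPure (.new e) (.new e)
  | deref : CGPure (.deref e) (.deref e)
  | assign : CGPure (.assign e1 e2) (.assign e1 e2)

/-- Forcing semantics for CG's monadic computations: actually performs heap
reads, writes and allocations. -/
inductive CGForce : Heap → Exp → Heap → Exp → Prop where
  | ret : CGPure e (.ret e0) → CGPure e0 v → CGForce h e h v
  | bind : CGPure e (.bind e1 e2) → CGForce h e1 h1 v1 →
      CGForce h1 (e2.subst v1 0) h2 v → CGForce h e h2 v
  | unlabel : CGPure e (.unlabel e0) → CGPure e0 (.label v) → CGForce h e h v
  | toLabeled : CGPure e (.toLabeled e0) → CGForce h e0 h1 v →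
      CGForce h e h1 (.label v)
  | new : CGPure e (.new e0) → CGPure e0 v → CGForce h e (h ++ [v]) (.loc h.length)
  | deref : CGPure e (.deref e0) → CGPure e0 (.loc n) → h[n]? = some v →
      CGForce h e h v
  | assign : CGPure e (.assign e1 e2) → CGPure e1 (.loc n) → CGPure e2 v →
      CGForce h e (h.set n v) .unit

/-! ## FG types (every type constructor carries its outer security label) -/

inductive FGTy (L : Type) : Type where
  | bool (l : L)
  | unit (l : L)
  | fn (t1 : FGTy L) (le : L) (t2 : FGTy L) (l : L)
  | prod (t1 t2 : FGTy L) (l : L)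
  | sum (t1 t2 : FGTy L) (l : L)
  | ref (t : FGTy L) (l : L)

/-- The outer label of an FG type (`(A^ℓ).lab = ℓ`).
`τ.lab ≥ ℓ` is the protection judgment `τ ↘ ℓ`. -/
def FGTy.lab {L : Type} : FGTy L → L
  | .bool l => l
  | .unit l => l
  | .fn _ _ _ l => l
  | .prod _ _ l => l
  | .sum _ _ l => l
  | .ref _ l => l

/-- FG subtyping: structural, covariant in security labels, contravariant in
the pc-label of function types, invariant in the content type of references. -/
inductive FGSub {L : Type} [Lattice L] [BoundedOrder L] : FGTy L → FGTy L → Prop where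
  | bool : l ≤ l' → FGSub (.bool l) (.bool l')
  | unit : l ≤ l' → FGSub (.unit l) (.unit l')
  | fn : FGSub τ1' τ1 → le' ≤ le → FGSub τ2 τ2' → l ≤ l' →
      FGSub (.fn τ1 le τ2 l) (.fn τ1' le' τ2' l')
  | prod : FGSub τ1 τ1' → FGSub τ2 τ2' → l ≤ l' →
      FGSub (.prod τ1 τ2 l) (.prod τ1' τ2' l')
  | sum : FGSub τ1 τ1' → FGSub τ2 τ2' → l ≤ l' →
      FGSub (.sum τ1 τ2 l) (.sum τ1' τ2' l')
  | ref : l ≤ l' → FGSub (.ref τ l) (.ref τ l')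

/-- The FG typing judgment `Γ ⊢_pc e : τ`. -/
inductive FGTyped {L : Type} [Lattice L] [BoundedOrder L] :
    List (FGTy L) → L → Exp → FGTy L → Prop where
  | var : Γ[n]? = some τ → FGTyped Γ pc (.var n) τ
  | tt : FGTyped Γ pc .tt (.bool ⊥)
  | ff : FGTyped Γ pc .ff (.bool ⊥)
  | unit : FGTyped Γ pc .unit (.unit ⊥)
  | lam : FGTyped (τ1 :: Γ) le e τ2 → FGTyped Γ pc (.lam e) (.fn τ1 le τ2 ⊥)
  | app : FGTyped Γ pc e1 (.fn τ1 le τ2 l) → FGTyped Γ pc e2 τ1 →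
      l ⊔ pc ≤ le → l ≤ τ2.lab → FGTyped Γ pc (.app e1 e2) τ2
  | pair : FGTyped Γ pc e1 τ1 → FGTyped Γ pc e2 τ2 →
      FGTyped Γ pc (.pair e1 e2) (.prod τ1 τ2 ⊥)
  | fst : FGTyped Γ pc e (.prod τ1 τ2 l) → l ≤ τ1.lab → FGTyped Γ pc (.fst e) τ1
  | snd : FGTyped Γ pc e (.prod τ1 τ2 l) → l ≤ τ2.lab → FGTyped Γ pc (.snd e) τ2
  | inl : FGTyped Γ pc e τ1 → FGTyped Γ pc (.inl e) (.sum τ1 τ2 ⊥)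
  | inr : FGTyped Γ pc e τ2 → FGTyped Γ pc (.inr e) (.sum τ1 τ2 ⊥)
  | case : FGTyped Γ pc e (.sum τ1 τ2 l) → FGTyped (τ1 :: Γ) (pc ⊔ l) e1 τ →
      FGTyped (τ2 :: Γ) (pc ⊔ l) e2 τ → l ≤ τ.lab →
      FGTyped Γ pc (.case e e1 e2) τ
  | new : FGTyped Γ pc e τ → pc ≤ τ.lab → FGTyped Γ pc (.new e) (.ref τ ⊥)
  | deref : FGTyped Γ pc e (.ref τ l) → FGSub τ τ' → l ≤ τ'.lab →
      FGTyped Γ pc (.deref e) τ'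
  | assign : FGTyped Γ pc e1 (.ref τ l) → FGTyped Γ pc e2 τ →
      pc ⊔ l ≤ τ.lab → FGTyped Γ pc (.assign e1 e2) (.unit ⊥)
  | sub : FGTyped Γ pc' e τ' → FGSub τ' τ → pc ≤ pc' → FGTyped Γ pc e τ

/-! ## CG types -/

inductive CGTy (L : Type) : Type where
  | bool
  | unit
  | fn (t1 t2 : CGTy L)
  | prod (t1 t2 : CGTy L)
  | sum (t1 t2 : CGTy L)
  | ref (l : L) (t : CGTy L)
  | labeled (l : L) (t : CGTy L)
  | monad (l1 l2 : L) (t : CGTy L)   -- CG ℓ1 ℓ2 τ : pc-label ℓ1, taint label ℓ2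

/-- CG subtyping: `Labeled ℓ τ` covariant in `ℓ` and `τ`; `CG ℓ1 ℓ2 τ`
contravariant in `ℓ1`, covariant in `ℓ2` and `τ`. -/
inductive CGSub {L : Type} [Lattice L] [BoundedOrder L] : CGTy L → CGTy L → Prop where
  | bool : CGSub .bool .bool
  | unit : CGSub .unit .unit
  | fn : CGSub τ1' τ1 → CGSub τ2 τ2' → CGSub (.fn τ1 τ2) (.fn τ1' τ2')
  | prod : CGSub τ1 τ1' → CGSub τ2 τ2' → CGSub (.prod τ1 τ2) (.prod τ1' τ2')
  | sum : CGSub τ1 τ1' → CGSub τ2 τ2' → CGSub (.sum τ1 τ2) (.sum τ1' τ2')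
  | ref : CGSub (.ref l τ) (.ref l τ)
  | labeled : CGSub τ τ' → l ≤ l' → CGSub (.labeled l τ) (.labeled l' τ')
  | monad : l1' ≤ l1 → l2 ≤ l2' → CGSub τ τ' →
      CGSub (.monad l1 l2 τ) (.monad l1' l2' τ')

/-- The CG typing judgment `Γ ⊢ e : τ`. -/
inductive CGTyped {L : Type} [Lattice L] [BoundedOrder L] :
    List (CGTy L) → Exp → CGTy L → Prop where
  | var : Γ[n]? = some τ → CGTyped Γ (.var n) τ
  | tt : CGTyped Γ .tt .bool
  | ff : CGTyped Γ .ff .bool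
  | unit : CGTyped Γ .unit .unit
  | lam : CGTyped (τ1 :: Γ) e τ2 → CGTyped Γ (.lam e) (.fn τ1 τ2)
  | app : CGTyped Γ e1 (.fn τ1 τ2) → CGTyped Γ e2 τ1 → CGTyped Γ (.app e1 e2) τ2
  | pair : CGTyped Γ e1 τ1 → CGTyped Γ e2 τ2 → CGTyped Γ (.pair e1 e2) (.prod τ1 τ2)
  | fst : CGTyped Γ e (.prod τ1 τ2) → CGTyped Γ (.fst e) τ1
  | snd : CGTyped Γ e (.prod τ1 τ2) → CGTyped Γ (.snd e) τ2
  | inl : CGTyped Γ e τ1 → CGTyped Γ (.inl e) (.sum τ1 τ2)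
  | inr : CGTyped Γ e τ2 → CGTyped Γ (.inr e) (.sum τ1 τ2)
  | case : CGTyped Γ e (.sum τ1 τ2) → CGTyped (τ1 :: Γ) e1 τ →
      CGTyped (τ2 :: Γ) e2 τ → CGTyped Γ (.case e e1 e2) τ
  | ret : CGTyped Γ e τ → CGTyped Γ (.ret e) (.monad ⊤ ⊥ τ)
  | bind : CGTyped Γ e1 (.monad l1 l2 τ) → CGTyped (τ :: Γ) e2 (.monad l3 l4 τ') →
      l ≤ l1 → l ≤ l3 → l2 ≤ l3 → l2 ≤ l4 →
      CGTyped Γ (.bind e1 e2) (.monad l l4 τ')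
  | label : CGTyped Γ e τ → CGTyped Γ (.label e) (.labeled l τ)
  | unlabel : CGTyped Γ e (.labeled l τ) → CGTyped Γ (.unlabel e) (.monad ⊤ l τ)
  | new : CGTyped Γ e (.labeled l τ) → CGTyped Γ (.new e) (.monad l ⊥ (.ref l τ))
  | deref : CGTyped Γ e (.ref l' τ) → CGTyped Γ (.deref e) (.monad ⊤ ⊥ (.labeled l' τ))
  | assign : CGTyped Γ e1 (.ref l τ) → CGTyped Γ e2 (.labeled l τ) →
      CGTyped Γ (.assign e1 e2) (.monad l ⊥ .unit)
  | toLabeled : CGTyped Γ e (.monad l l' τ) →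
      CGTyped Γ (.toLabeled e) (.monad l ⊥ (.labeled l' τ))
  | sub : CGTyped Γ e τ' → CGSub τ' τ → CGTyped Γ e τ

/-! ## The CG-to-FG type translation ⟦·⟧ -/

def toFG {L : Type} [Lattice L] [BoundedOrder L] : CGTy L → FGTy L
  | .bool => .bool ⊥
  | .unit => .unit ⊥
  | .fn τ1 τ2 => .fn (toFG τ1) ⊤ (toFG τ2) ⊥
  | .prod τ1 τ2 => .prod (toFG τ1) (toFG τ2) ⊥
  | .sum τ1 τ2 => .sum (toFG τ1) (toFG τ2) ⊥
  | .ref l τ => .ref (.sum (toFG τ) (.unit ⊥) l) ⊥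
  | .labeled l τ => .sum (toFG τ) (.unit ⊥) l
  | .monad l1 l2 τ => .fn (.unit ⊥) l1 (.sum (toFG τ) (.unit ⊥) l2) ⊥

/-! ## The FG-to-CG type translation: ⟦A^ℓ⟧ = Labeled ℓ ⟨A⟩ -/

/-- `⟨A⟩`: translation of the unlabeled part of an FG type. -/
def trA {L : Type} [Lattice L] [BoundedOrder L] : FGTy L → CGTy L
  | .bool _ => .bool
  | .unit _ => .unit
  | .fn τ1 le τ2 _ =>
      .fn (.labeled τ1.lab (trA τ1)) (.monad le ⊥ (.labeled τ2.lab (trA τ2)))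
  | .prod τ1 τ2 _ => .prod (.labeled τ1.lab (trA τ1)) (.labeled τ2.lab (trA τ2))
  | .sum τ1 τ2 _ => .sum (.labeled τ1.lab (trA τ1)) (.labeled τ2.lab (trA τ2))
  | .ref τ _ => .ref τ.lab (trA τ)

/-- `⟦A^ℓ⟧ = Labeled ℓ ⟨A⟩`. -/
def toCG {L : Type} [Lattice L] [BoundedOrder L] (τ : FGTy L) : CGTy L :=
  .labeled τ.lab (trA τ)

/-! ## CG-to-FG expression translation `Γ ⊢ e : τ ⇝ e_F` -/

inductive CG2FG {L : Type} [Lattice L] [BoundedOrder L] :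
    List (CGTy L) → Exp → CGTy L → Exp → Prop where
  | var : Γ[n]? = some τ → CG2FG Γ (.var n) τ (.var n)
  | tt : CG2FG Γ .tt .bool .tt
  | ff : CG2FG Γ .ff .bool .ff
  | unit : CG2FG Γ .unit .unit .unit
  | lam : CG2FG (τ1 :: Γ) e τ2 eF → CG2FG Γ (.lam e) (.fn τ1 τ2) (.lam eF)
  | app : CG2FG Γ e1 (.fn τ1 τ2) eF1 → CG2FG Γ e2 τ1 eF2 →
      CG2FG Γ (.app e1 e2) τ2 (.app eF1 eF2)
  | pair : CG2FG Γ e1 τ1 eF1 → CG2FG Γ e2 τ2 eF2 →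
      CG2FG Γ (.pair e1 e2) (.prod τ1 τ2) (.pair eF1 eF2)
  | fst : CG2FG Γ e (.prod τ1 τ2) eF → CG2FG Γ (.fst e) τ1 (.fst eF)
  | snd : CG2FG Γ e (.prod τ1 τ2) eF → CG2FG Γ (.snd e) τ2 (.snd eF)
  | inl : CG2FG Γ e τ1 eF → CG2FG Γ (.inl e) (.sum τ1 τ2) (.inl eF)
  | inr : CG2FG Γ e τ2 eF → CG2FG Γ (.inr e) (.sum τ1 τ2) (.inr eF)
  | case : CG2FG Γ e (.sum τ1 τ2) eF → CG2FG (τ1 :: Γ) e1 τ eF1 →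
      CG2FG (τ2 :: Γ) e2 τ eF2 → CG2FG Γ (.case e e1 e2) τ (.case eF eF1 eF2)
  | label : CG2FG Γ e τ eF → CG2FG Γ (.label e) (.labeled l τ) (.inl eF)
  | unlabel : CG2FG Γ e (.labeled l τ) eF →
      CG2FG Γ (.unlabel e) (.monad ⊤ l τ) (.lam (eF.shift 0))
  | toLabeled : CG2FG Γ e (.monad l1 l2 τ) eF →
      CG2FG Γ (.toLabeled e) (.monad l1 ⊥ (.labeled l2 τ))
        (.lam (.inl (.app (eF.shift 0) .unit)))
  | ret : CG2FG Γ e τ eF → CG2FG Γ (.ret e) (.monad ⊤ ⊥ τ) (.lam (.inl (eF.shift 0)))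
  | bind : CG2FG Γ e1 (.monad l1 l2 τ) eF1 →
      CG2FG (τ :: Γ) e2 (.monad l3 l4 τ') eF2 →
      l ≤ l1 → l ≤ l3 → l2 ≤ l3 → l2 ≤ l4 →
      CG2FG Γ (.bind e1 e2) (.monad l l4 τ')
        (.lam (.case (.app (eF1.shift 0) .unit) (.app (eF2.shift 1) .unit)
          (.inr .unit)))
  | new : CG2FG Γ e (.labeled l τ) eF →
      CG2FG Γ (.new e) (.monad l ⊥ (.ref l τ)) (.lam (.inl (.new (eF.shift 0))))
  | deref : CG2FG Γ e (.ref l' τ) eF →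
      CG2FG Γ (.deref e) (.monad ⊤ ⊥ (.labeled l' τ))
        (.lam (.inl (.deref (eF.shift 0))))
  | assign : CG2FG Γ e1 (.ref l τ) eF1 → CG2FG Γ e2 (.labeled l τ) eF2 →
      CG2FG Γ (.assign e1 e2) (.monad l ⊥ .unit)
        (.lam (.inl (.assign (eF1.shift 0) (eF2.shift 0))))
  | sub : CG2FG Γ e τ' eF → CGSub τ' τ → CG2FG Γ e τ eF

/-! ## FG-to-CG expression translation `Γ ⊢_pc e : τ ⇝ e_c` -/

/-- `coerce_taint ≜ λx. toLabeled(bind(x, y. unlabel y))`. -/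
def coerceTaint : Exp := .lam (.toLabeled (.bind (.var 0) (.unlabel (.var 0))))

inductive FG2CG {L : Type} [Lattice L] [BoundedOrder L] :
    List (FGTy L) → L → Exp → FGTy L → Exp → Prop where
  | var : Γ[n]? = some τ → FG2CG Γ pc (.var n) τ (.ret (.var n))
  | tt : FG2CG Γ pc .tt (.bool ⊥) (.ret (.label .tt))
  | ff : FG2CG Γ pc .ff (.bool ⊥) (.ret (.label .ff))
  | unit : FG2CG Γ pc .unit (.unit ⊥) (.ret (.label .unit))
  | lam : FG2CG (τ1 :: Γ) le e τ2 ec →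
      FG2CG Γ pc (.lam e) (.fn τ1 le τ2 ⊥) (.ret (.label (.lam ec)))
  | app : FG2CG Γ pc e1 (.fn τ1 le τ2 l) ec1 → FG2CG Γ pc e2 τ1 ec2 →
      l ⊔ pc ≤ le → l ≤ τ2.lab →
      FG2CG Γ pc (.app e1 e2) τ2
        (.app coerceTaint
          (.bind ec1 (.bind (ec2.shift 0)
            (.bind (.unlabel (.var 1)) (.app (.var 0) (.var 1))))))
  | pair : FG2CG Γ pc e1 τ1 ec1 → FG2CG Γ pc e2 τ2 ec2 →
      FG2CG Γ pc (.pair e1 e2) (.prod τ1 τ2 ⊥)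
        (.bind ec1 (.bind (ec2.shift 0) (.ret (.label (.pair (.var 1) (.var 0))))))
  | fst : FG2CG Γ pc e (.prod τ1 τ2 l) ec → l ≤ τ1.lab →
      FG2CG Γ pc (.fst e) τ1
        (.app coerceTaint
          (.bind ec (.bind (.unlabel (.var 0)) (.ret (.fst (.var 0))))))
  | snd : FG2CG Γ pc e (.prod τ1 τ2 l) ec → l ≤ τ2.lab →
      FG2CG Γ pc (.snd e) τ2
        (.app coerceTaint
          (.bind ec (.bind (.unlabel (.var 0)) (.ret (.snd (.var 0))))))
  | inl : FG2CG Γ pc e τ1 ec →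
      FG2CG Γ pc (.inl e) (.sum τ1 τ2 ⊥) (.bind ec (.ret (.label (.inl (.var 0)))))
  | inr : FG2CG Γ pc e τ2 ec →
      FG2CG Γ pc (.inr e) (.sum τ1 τ2 ⊥) (.bind ec (.ret (.label (.inr (.var 0)))))
  | case : FG2CG Γ pc e (.sum τ1 τ2 l) ec →
      FG2CG (τ1 :: Γ) (pc ⊔ l) e1 τ ec1 → FG2CG (τ2 :: Γ) (pc ⊔ l) e2 τ ec2 →
      l ≤ τ.lab →
      FG2CG Γ pc (.case e e1 e2) τ
        (.app coerceTaint
          (.bind ec (.bind (.unlabel (.var 0))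
            (.case (.var 0) ((ec1.shift 1).shift 1) ((ec2.shift 1).shift 1)))))
  | new : FG2CG Γ pc e τ ec → pc ≤ τ.lab →
      FG2CG Γ pc (.new e) (.ref τ ⊥)
        (.bind ec (.bind (.new (.var 0)) (.ret (.label (.var 0)))))
  | deref : FG2CG Γ pc e (.ref τ l) ec → FGSub τ τ' → l ≤ τ'.lab →
      FG2CG Γ pc (.deref e) τ'
        (.app coerceTaint
          (.bind ec (.bind (.unlabel (.var 0)) (.deref (.var 0)))))
  | assign : FG2CG Γ pc e1 (.ref τ l) ec1 → FG2CG Γ pc e2 τ ec2 →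
      pc ⊔ l ≤ τ.lab →
      FG2CG Γ pc (.assign e1 e2) (.unit ⊥)
        (.bind (.toLabeled (.bind ec1 (.bind (ec2.shift 0)
          (.bind (.unlabel (.var 1)) (.assign (.var 0) (.var 1))))))
          (.ret (.label .unit)))
  | sub : FG2CG Γ pc' e τ' ec → FGSub τ' τ → pc ≤ pc' → FG2CG Γ pc e τ ec

/-! ### The translation as a function -/

/-- The FG-to-CG translation as a function of the source expression alone. The value on expressions
outside the FG fragment (locations and the monadic constructs) is irrelevant. -/
def fgToCg : Exp → Exp
  | .var n => .ret (.var n)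
  | .tt => .ret (.label .tt)
  | .ff => .ret (.label .ff)
  | .unit => .ret (.label .unit)
  | .lam e => .ret (.label (.lam (fgToCg e)))
  | .app e1 e2 => .app coerceTaint
      (.bind (fgToCg e1) (.bind ((fgToCg e2).shift 0)
        (.bind (.unlabel (.var 1)) (.app (.var 0) (.var 1)))))
  | .pair e1 e2 =>
      .bind (fgToCg e1) (.bind ((fgToCg e2).shift 0) (.ret (.label (.pair (.var 1) (.var 0)))))
  | .fst e => .app coerceTaint
      (.bind (fgToCg e) (.bind (.unlabel (.var 0)) (.ret (.fst (.var 0)))))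
  | .snd e => .app coerceTaint
      (.bind (fgToCg e) (.bind (.unlabel (.var 0)) (.ret (.snd (.var 0)))))
  | .inl e => .bind (fgToCg e) (.ret (.label (.inl (.var 0))))
  | .inr e => .bind (fgToCg e) (.ret (.label (.inr (.var 0))))
  | .case e e1 e2 => .app coerceTaint
      (.bind (fgToCg e) (.bind (.unlabel (.var 0))
        (.case (.var 0) (((fgToCg e1).shift 1).shift 1) (((fgToCg e2).shift 1).shift 1))))
  | .new e => .bind (fgToCg e) (.bind (.new (.var 0)) (.ret (.label (.var 0))))
  | .deref e => .app coerceTaint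
      (.bind (fgToCg e) (.bind (.unlabel (.var 0)) (.deref (.var 0))))
  | .assign e1 e2 =>
      .bind (.toLabeled (.bind (fgToCg e1) (.bind ((fgToCg e2).shift 0)
        (.bind (.unlabel (.var 1)) (.assign (.var 0) (.var 1))))))
        (.ret (.label .unit))
  | e => e

section

variable {L : Type} [Lattice L] [BoundedOrder L]

theorem FG2CG.eq_fgToCg {Γ : List (FGTy L)} {pc : L} {e : Exp} {τ : FGTy L} {ec : Exp}
    (h : FG2CG Γ pc e τ ec) : ec = fgToCg e := by
  induction h <;> simp_all [fgToCg]

theorem FGTyped.fg2cg {Γ : List (FGTy L)} {pc : L} {e : Exp} {τ : FGTy L}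
    (h : FGTyped Γ pc e τ) : FG2CG Γ pc e τ (fgToCg e) := by
  induction h with
  | var h => exact .var h
  | tt => exact .tt
  | ff => exact .ff
  | unit => exact .unit
  | lam _ ih => exact .lam ih
  | app _ _ h1 h2 ih1 ih2 => exact .app ih1 ih2 h1 h2
  | pair _ _ ih1 ih2 => exact .pair ih1 ih2
  | fst _ h ih => exact .fst ih h
  | snd _ h ih => exact .snd ih h
  | inl _ ih => exact .inl ih
  | inr _ ih => exact .inr ih
  | case _ _ _ h ih ih1 ih2 => exact .case ih ih1 ih2 h
  | new _ h ih => exact .new ih h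
  | deref _ hs h ih => exact .deref ih hs h
  | assign _ _ h ih1 ih2 => exact .assign ih1 ih2 h
  | sub _ hs h ih => exact .sub ih hs h

/-! ### Subtyping and weakening -/

theorem CGSub.refl (τ : CGTy L) : CGSub τ τ := by
  induction τ with
  | bool => exact .bool
  | unit => exact .unit
  | fn _ _ h1 h2 => exact .fn h1 h2
  | prod _ _ h1 h2 => exact .prod h1 h2
  | sum _ _ h1 h2 => exact .sum h1 h2
  | ref => exact .ref
  | labeled _ _ h => exact .labeled h le_rfl
  | monad _ _ _ h => exact .monad le_rfl le_rfl h

theorem FGSub.toCG {τ τ' : FGTy L} (h : FGSub τ τ') : CGSub (toCG τ) (toCG τ') := by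
  induction h with
  | bool h => exact .labeled .bool h
  | unit h => exact .labeled .unit h
  | fn _ hl _ h ih1 ih2 => exact .labeled (.fn ih1 (.monad hl le_rfl ih2)) h
  | prod _ _ h ih1 ih2 => exact .labeled (.prod ih1 ih2) h
  | sum _ _ h ih1 ih2 => exact .labeled (.sum ih1 ih2) h
  | ref h => exact .labeled .ref h

/-- Weakening: a variable of type `σ` may be inserted at any position of the context. -/
theorem CGTyped.weaken {Γ₁ Γ₂ : List (CGTy L)} {e : Exp} {τ : CGTy L} (σ : CGTy L)
    (h : CGTyped (Γ₁ ++ Γ₂) e τ) :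
    CGTyped (Γ₁ ++ σ :: Γ₂) (e.shift Γ₁.length) τ := by
  generalize hΓ : Γ₁ ++ Γ₂ = Γ at h
  induction h generalizing Γ₁ with
  | @var Γ n τ h =>
    subst hΓ
    unfold Exp.shift
    split
    · next hn =>
      refine .var ?_
      rw [List.getElem?_append_left hn] at h ⊢
      exact h
    · next hn =>
      refine .var ?_
      rw [List.getElem?_append_right (by omega)] at h ⊢
      rw [show n + 1 - Γ₁.length = (n - Γ₁.length) + 1 by omega, List.getElem?_cons_succ]
      exact h
  | tt => exact .tt
  | ff => exact .ff
  | unit => exact .unit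
  | @lam τ1 _ _ _ _ ih => exact .lam (ih (Γ₁ := τ1 :: Γ₁) (by simp [hΓ]))
  | app _ _ ih1 ih2 => exact .app (ih1 hΓ) (ih2 hΓ)
  | pair _ _ ih1 ih2 => exact .pair (ih1 hΓ) (ih2 hΓ)
  | fst _ ih => exact .fst (ih hΓ)
  | snd _ ih => exact .snd (ih hΓ)
  | inl _ ih => exact .inl (ih hΓ)
  | inr _ ih => exact .inr (ih hΓ)
  | case _ _ _ ih ih1 ih2 =>
    exact .case (ih hΓ) (ih1 (Γ₁ := _ :: Γ₁) (by rw [← hΓ]; rfl))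
      (ih2 (Γ₁ := _ :: Γ₁) (by rw [← hΓ]; rfl))
  | ret _ ih => exact .ret (ih hΓ)
  | bind _ _ h1 h2 h3 h4 ih1 ih2 =>
    exact .bind (ih1 hΓ) (ih2 (Γ₁ := _ :: Γ₁) (by rw [← hΓ]; rfl)) h1 h2 h3 h4
  | label _ ih => exact .label (ih hΓ)
  | unlabel _ ih => exact .unlabel (ih hΓ)
  | new _ ih => exact .new (ih hΓ)
  | deref _ ih => exact .deref (ih hΓ)
  | assign _ _ ih1 ih2 => exact .assign (ih1 hΓ) (ih2 hΓ)
  | toLabeled _ ih => exact .toLabeled (ih hΓ)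
  | sub _ hs ih => exact .sub (ih hΓ) hs

theorem CGTyped.weaken_zero {Γ : List (CGTy L)} {e : Exp} {τ : CGTy L} (σ : CGTy L)
    (h : CGTyped Γ e τ) : CGTyped (σ :: Γ) (e.shift 0) τ :=
  CGTyped.weaken (Γ₁ := []) σ h

/-- Two variables inserted just below the innermost one, as in the branches of a translated
`case`. -/
theorem CGTyped.weaken_one_twice {Γ : List (CGTy L)} {e : Exp} {τ ρ : CGTy L} (σ₁ σ₂ : CGTy L)
    (h : CGTyped (ρ :: Γ) e τ) :
    CGTyped (ρ :: σ₁ :: σ₂ :: Γ) ((e.shift 1).shift 1) τ :=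
  CGTyped.weaken (Γ₁ := [ρ]) σ₁ (CGTyped.weaken (Γ₁ := [ρ]) σ₂ h)

/-! ### Typing of translated expressions -/

/-- Subsumption on the two labels of a monadic type. -/
theorem CGTyped.monad_mono {Γ : List (CGTy L)} {e : Exp} {τ : CGTy L} {l1 l1' l2 l2' : L}
    (h : CGTyped Γ e (.monad l1 l2 τ)) (h1 : l1' ≤ l1) (h2 : l2 ≤ l2') :
    CGTyped Γ e (.monad l1' l2' τ) :=
  .sub h (.monad h1 h2 (CGSub.refl τ))

/-- `ret` at arbitrary pc and taint. -/
theorem CGTyped.ret_any {Γ : List (CGTy L)} {e : Exp} {τ : CGTy L} (l1 l2 : L)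
    (h : CGTyped Γ e τ) : CGTyped Γ (.ret e) (.monad l1 l2 τ) :=
  (CGTyped.ret h).monad_mono le_top bot_le

/-- Sequencing after an untainted computation at the same pc imposes no label constraint. -/
theorem CGTyped.bind_untainted {Γ : List (CGTy L)} {e1 e2 : Exp} {τ τ' : CGTy L} {pc l : L}
    (h1 : CGTyped Γ e1 (.monad pc ⊥ τ)) (h2 : CGTyped (τ :: Γ) e2 (.monad pc l τ')) :
    CGTyped Γ (.bind e1 e2) (.monad pc l τ') :=
  .bind h1 h2 le_rfl le_rfl bot_le bot_le

/-- Unlabeling at `l` taints the continuation with `l` and raises its pc to at least `l`. -/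
theorem CGTyped.bind_unlabel {Γ : List (CGTy L)} {e1 e2 : Exp} {τ τ' : CGTy L} {pc l l3 : L}
    (h1 : CGTyped Γ e1 (.labeled l τ)) (h2 : CGTyped (τ :: Γ) e2 (.monad l3 ⊥ τ'))
    (hpc : pc ≤ l3) (hl : l ≤ l3) :
    CGTyped Γ (.bind (.unlabel e1) e2) (.monad pc l τ') :=
  .bind (.unlabel h1) (h2.monad_mono le_rfl bot_le) le_top hpc hl le_rfl

/-- `coerceTaint` absorbs the taint of a computation into the label of its result. -/
theorem CGTyped.coerceTaint {Γ : List (CGTy L)} {e : Exp} {τ : FGTy L} {pc l : L}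
    (h : CGTyped Γ e (.monad pc l (toCG τ))) (hl : l ≤ τ.lab) :
    CGTyped Γ (.app coerceTaint e) (.monad pc ⊥ (toCG τ)) := by
  exact .app (.lam (.toLabeled (.bind (.var rfl) (.unlabel (.var rfl)) le_rfl le_top le_top hl))) h

theorem FG2CG.cgTyped {Γ : List (FGTy L)} {pc : L} {e : Exp} {τ : FGTy L} {ec : Exp}
    (h : FG2CG Γ pc e τ ec) :
    CGTyped (Γ.map toCG) ec (.monad pc ⊥ (toCG τ)) := by
  induction h with
  | var h => exact .ret_any _ _ (.var (by simp [h]))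
  | tt => exact .ret_any _ _ (.label .tt)
  | ff => exact .ret_any _ _ (.label .ff)
  | unit => exact .ret_any _ _ (.label .unit)
  | lam _ ih => exact .ret_any _ _ (.label (.lam ih))
  | app _ _ h1 h2 ih1 ih2 =>
    exact .coerceTaint (.bind_untainted ih1 (.bind_untainted (ih2.weaken_zero _)
      (.bind_unlabel (.var rfl) (.app (.var rfl) (.var rfl))
        (le_sup_right.trans h1) (le_sup_left.trans h1)))) h2
  | pair _ _ ih1 ih2 =>
    exact .bind_untainted ih1 (.bind_untainted (ih2.weaken_zero _)
      (.ret_any _ _ (.label (.pair (.var rfl) (.var rfl)))))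
  | fst _ h ih =>
    exact .coerceTaint (.bind_untainted ih
      (.bind_unlabel (.var rfl) (.ret (.fst (.var rfl))) le_top le_top)) h
  | snd _ h ih =>
    exact .coerceTaint (.bind_untainted ih
      (.bind_unlabel (.var rfl) (.ret (.snd (.var rfl))) le_top le_top)) h
  | inl _ ih => exact .bind_untainted ih (.ret_any _ _ (.label (.inl (.var rfl))))
  | inr _ ih => exact .bind_untainted ih (.ret_any _ _ (.label (.inr (.var rfl))))
  | case _ _ _ h ih ih1 ih2 =>
    exact .coerceTaint (.bind_untainted ih (.bind_unlabel (.var rfl)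
      (.case (.var rfl) (ih1.weaken_one_twice _ _) (ih2.weaken_one_twice _ _))
      le_sup_left le_sup_right)) h
  | new _ h ih =>
    exact .bind_untainted ih (.bind_untainted ((CGTyped.new (.var rfl)).monad_mono h le_rfl)
      (.ret_any _ _ (.label (.var rfl))))
  | deref _ hs h ih =>
    -- The stored type is only a subtype of the result type: subsume before removing the taint.
    exact .coerceTaint (.bind_untainted ih (.bind_unlabel (.var rfl)
      (.sub (.deref (.var rfl)) (.monad le_rfl le_rfl hs.toCG)) le_top le_top)) h
  | assign _ _ h ih1 ih2 =>
    exact .bind_untainted (.toLabeled (.bind_untainted ih1 (.bind_untainted (ih2.weaken_zero _)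
      (.bind_unlabel (.var rfl) (.assign (.var rfl) (.var rfl))
        (le_sup_left.trans h) (le_sup_right.trans h)))))
      (.ret_any _ _ (.label .unit))
  | sub _ hs h ih => exact .sub ih (.monad h le_rfl hs.toCG)

end

/-! ## STATEMENT 3: Typing preservation of the FG-to-CG translation -/

theorem fg2cg_typing_preservation
    {L : Type} [Lattice L] [BoundedOrder L]
    (Γ : List (FGTy L)) (pc : L) (es : Exp) (τ : FGTy L)
    (hty : FGTyped Γ pc es τ) :
    (∃! ec : Exp, FG2CG Γ pc es τ ec) ∧
      ∀ ec : Exp, FG2CG Γ pc es τ ec →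
        CGTyped (Γ.map toCG) ec (CGTy.monad pc ⊥ (toCG τ)) := by
  exact ⟨⟨fgToCg es, hty.fg2cg, fun _ h => h.eq_fgToCg⟩, fun _ h => h.cgTyped⟩
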